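/- arXiv:1904.00962 — 2 statements merged into one kernel-verified Lean document; each statement's English description precedes it below -/
import Mathlib

section
/- Let f : ℝ^d → ℝ be differentiable, blockwise (L_1,…,L_h)-smooth with respect to a partition of the coordinates into h blocks. Let x, g ∈ ℝ^d with g^{(i)} ≠ 0 for every block i, let η > 0, let 0 < α_l ≤ α_u, and let c_1,…,c_h ∈ [α_l, α_u]. Define x⁺ blockwise by x⁺^{(i)} = x^{(i)} − η c_i g^{(i)}/‖g^{(i)}‖. Then f(x⁺) ≤ f(x) − η Σ_{i=1}^h c_i ‖∇_i f(x)‖ + 2η Σ_{i=1}^h c_i ‖g^{(i)} − ∇_i f(x)‖ + (η² α_u²/2) Σ_{i=1}^h L_i. -/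
/-!
The proof is the blockwise descent lemma followed by a comparison of `g` with `∇ f x`.

Write `v = x⁺ - x`, so that `‖v⁽ⁱ⁾‖ = η c_i`. Along the segment `t ↦ x + t v`, splitting the inner
product into blocks, Cauchy-Schwarz in each block and blockwise smoothness bound the derivative
of `f` at time `t` by `⟪∇ f x, v⟫ + t ∑ L_i ‖v⁽ⁱ⁾‖²`; integrating over `[0, 1]` gives
`f x⁺ ≤ f x + ⟪∇ f x, v⟫ + (1/2) ∑ L_i ‖v⁽ⁱ⁾‖²` (`block_descent`). In each block,
`-⟪∇_i f x, g⁽ⁱ⁾⟫ / ‖g⁽ⁱ⁾‖ ≤ -‖g⁽ⁱ⁾‖ + ‖g⁽ⁱ⁾ - ∇_i f x‖ ≤ -‖∇_i f x‖ + 2 ‖g⁽ⁱ⁾ - ∇_i f x‖`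
(`blockInner_lower`), and `(η c_i)² ≤ η² α_u²`.
-/

open Finset

/-- The Euclidean norm of the `i`-th block of `u`, where the coordinates of `ℝ^d`
are partitioned into `h` blocks via the block-assignment map `blk`. -/
noncomputable def blockNorm {d h : ℕ} (blk : Fin d → Fin h) (i : Fin h)
    (u : EuclideanSpace ℝ (Fin d)) : ℝ :=
  Real.sqrt (∑ j ∈ Finset.univ.filter (fun j => blk j = i), u j ^ 2)

/-- The Euclidean inner product of the `i`-th blocks of `u` and `v`. -/
noncomputable def blockInner {d h : ℕ} (blk : Fin d → Fin h) (i : Fin h)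
    (u v : EuclideanSpace ℝ (Fin d)) : ℝ :=
  ∑ j ∈ Finset.univ.filter (fun j => blk j = i), u j * v j

section Block

variable {d h : ℕ} (blk : Fin d → Fin h) (i : Fin h) (u v w : EuclideanSpace ℝ (Fin d))

lemma blockNorm_nonneg : 0 ≤ blockNorm blk i u := Real.sqrt_nonneg _

lemma blockNorm_sq : blockNorm blk i u ^ 2 = blockInner blk i u u := by
  unfold blockNorm blockInner
  rw [Real.sq_sqrt (Finset.sum_nonneg fun j _ => sq_nonneg _)]
  simp only [sq]

lemma blockInner_le : blockInner blk i u v ≤ blockNorm blk i u * blockNorm blk i v :=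
  Real.sum_mul_le_sqrt_mul_sqrt _ _ _

lemma blockInner_sub_left :
    blockInner blk i (u - v) w = blockInner blk i u w - blockInner blk i v w := by
  simp [blockInner, sub_mul, Finset.sum_sub_distrib]

lemma blockInner_comm : blockInner blk i u v = blockInner blk i v u := by
  simp [blockInner, mul_comm]

lemma sum_blockInner : ∑ i, blockInner blk i u v = inner ℝ u v := by
  unfold blockInner
  rw [Finset.sum_fiberwise, PiLp.inner_apply]
  simp [mul_comm]

lemma blockNorm_smul (t : ℝ) (ht : 0 ≤ t) :
    blockNorm blk i (t • u) = t * blockNorm blk i u := by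
  unfold blockNorm
  simp only [PiLp.smul_apply, smul_eq_mul, mul_pow]
  rw [← Finset.mul_sum, Real.sqrt_mul (sq_nonneg t), Real.sqrt_sq ht]

lemma blockNorm_sub_comm : blockNorm blk i (u - v) = blockNorm blk i (v - u) := by
  unfold blockNorm
  simp only [PiLp.sub_apply, sub_sq_comm]

/-- Pairing with a vector `g` whose block is close to that of `u` recovers the block norm of `u`
up to twice the distance: one copy of the distance from Cauchy-Schwarz, one from the triangle
inequality. -/
lemma blockInner_lower (g : EuclideanSpace ℝ (Fin d)) :
    blockNorm blk i g * (blockNorm blk i u - 2 * blockNorm blk i (g - u))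
      ≤ blockInner blk i u g := by
  have h1 := blockInner_le blk i (g - u) g
  have hg := blockNorm_sq blk i g
  have hu := blockNorm_sq blk i u
  have hgu := blockNorm_sq blk i (g - u)
  have e1 := blockInner_sub_left blk i g u g
  have e2 := blockInner_sub_left blk i g u (g - u)
  have e3 := blockInner_sub_left blk i g u u
  have e4 := blockInner_comm blk i g (g - u)
  have e5 := blockInner_comm blk i u (g - u)
  have e6 := blockInner_comm blk i u g
  have ng := blockNorm_nonneg blk i g
  have ngu := blockNorm_nonneg blk i (g - u)
  have tri : blockNorm blk i u ≤ blockNorm blk i g + blockNorm blk i (g - u) := by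
    have h3 := blockInner_le blk i (u - g) g
    rw [blockInner_sub_left, blockNorm_sub_comm] at h3
    exact (abs_le_of_sq_le_sq' (by nlinarith) (by positivity)).2
  nlinarith [mul_le_mul_of_nonneg_left tri ng]

end Block

/-- The descent lemma for a blockwise smooth function. -/
lemma block_descent {d h : ℕ} (blk : Fin d → Fin h)
    (f : EuclideanSpace ℝ (Fin d) → ℝ) (L : Fin h → ℝ)
    (hdiff : Differentiable ℝ f)
    (hsmooth : ∀ x y : EuclideanSpace ℝ (Fin d), ∀ i : Fin h,
      blockNorm blk i (gradient f x - gradient f y) ≤ L i * blockNorm blk i (x - y))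
    (x v : EuclideanSpace ℝ (Fin d)) :
    f (x + v) ≤ f x + ∑ i, blockInner blk i (gradient f x) v
      + 1 / 2 * ∑ i, L i * blockNorm blk i v ^ 2 := by
  set A := ∑ i, blockInner blk i (gradient f x) v with hA
  set B := ∑ i, L i * blockNorm blk i v ^ 2 with hB
  have hderiv : ∀ t : ℝ, HasDerivAt (fun t : ℝ => f (x + t • v) - t * A - t ^ 2 / 2 * B)
      (inner ℝ (gradient f (x + t • v)) v - A - t * B) t := by
    intro t
    have h1 : HasDerivAt (fun t : ℝ => x + t • v) v t := by
      simpa using ((hasDerivAt_id t).smul_const v).const_add x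
    have h2 := (hdiff (x + t • v)).hasGradientAt.hasFDerivAt.comp_hasDerivAt t h1
    have h3 : HasDerivAt (fun t : ℝ => t * A) A t := by
      simpa using (hasDerivAt_id t).mul_const A
    have h4 : HasDerivAt (fun t : ℝ => t ^ 2 / 2 * B) (t * B) t := by
      refine (((hasDerivAt_pow 2 t).div_const 2).mul_const B).congr_deriv ?_
      norm_num
    exact (h2.sub h3).sub h4
  have hanti : AntitoneOn (fun t : ℝ => f (x + t • v) - t * A - t ^ 2 / 2 * B)
      (Set.Icc 0 1) := by
    apply antitoneOn_of_deriv_nonpos (convex_Icc 0 1)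
    · exact fun t _ => (hderiv t).continuousAt.continuousWithinAt
    · exact fun t _ => (hderiv t).differentiableAt.differentiableWithinAt
    · intro t ht
      rw [interior_Icc] at ht
      have ht0 : 0 ≤ t := ht.1.le
      rw [(hderiv t).deriv, ← sum_blockInner blk, hA, hB, ← Finset.sum_sub_distrib,
        Finset.mul_sum, ← Finset.sum_sub_distrib]
      refine Finset.sum_nonpos fun i _ => ?_
      rw [← blockInner_sub_left]
      have h1 := blockInner_le blk i (gradient f (x + t • v) - gradient f x) v
      have h2 := hsmooth (x + t • v) x i
      rw [add_sub_cancel_left, blockNorm_smul blk i v t ht0] at h2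
      nlinarith [mul_le_mul_of_nonneg_right h2 (blockNorm_nonneg blk i v)]
  have := hanti (Set.left_mem_Icc.2 zero_le_one) (Set.right_mem_Icc.2 zero_le_one) zero_le_one
  simp only [one_smul, zero_smul, add_zero] at this
  linarith

/-- One normalized blockwise step: if `f` is blockwise `(L 1, …, L h)`-smooth, `g⁽ⁱ⁾ ≠ 0`
for every block, `c i ∈ [α_l, α_u]`, and `x⁺⁽ⁱ⁾ = x⁽ⁱ⁾ - η c_i g⁽ⁱ⁾/‖g⁽ⁱ⁾‖`, then
`f x⁺ ≤ f x - η Σ_i c_i ‖∇_i f x‖ + 2η Σ_i c_i ‖g⁽ⁱ⁾ - ∇_i f x‖ + (η² α_u²/2) Σ_i L_i`. -/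
theorem stmt2 {d h : ℕ} (blk : Fin d → Fin h)
    (f : EuclideanSpace ℝ (Fin d) → ℝ) (L : Fin h → ℝ)
    (hdiff : Differentiable ℝ f)
    (hsmooth : ∀ x y : EuclideanSpace ℝ (Fin d), ∀ i : Fin h,
      blockNorm blk i (gradient f x - gradient f y) ≤ L i * blockNorm blk i (x - y))
    (x g : EuclideanSpace ℝ (Fin d))
    (hg : ∀ i, blockNorm blk i g ≠ 0)
    (η : ℝ) (hη : 0 < η)
    (αl αu : ℝ) (hαl : 0 < αl) (hαlu : αl ≤ αu)
    (c : Fin h → ℝ) (hc : ∀ i, αl ≤ c i ∧ c i ≤ αu)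
    (xp : EuclideanSpace ℝ (Fin d))
    (hxp : ∀ j, xp j = x j - η * c (blk j) * g j / blockNorm blk (blk j) g) :
    f xp ≤ f x - η * ∑ i, c i * blockNorm blk i (gradient f x)
      + 2 * η * ∑ i, c i * blockNorm blk i (g - gradient f x)
      + η ^ 2 * αu ^ 2 / 2 * ∑ i, L i := by
  have hv : ∀ j, (xp - x) j = -(η * c (blk j) / blockNorm blk (blk j) g) * g j := by
    intro j
    rw [PiLp.sub_apply, hxp j]
    ring
  have hinner : ∀ i u, blockInner blk i u (xp - x)
      = -(η * c i / blockNorm blk i g) * blockInner blk i u g := by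
    intro i u
    unfold blockInner
    rw [Finset.mul_sum]
    refine Finset.sum_congr rfl fun j hj => ?_
    rw [hv j, (Finset.mem_filter.1 hj).2]
    ring
  have hpos : ∀ i, 0 < blockNorm blk i g := fun i =>
    lt_of_le_of_ne (blockNorm_nonneg blk i g) (hg i).symm
  have hnorm : ∀ i, blockNorm blk i (xp - x) ^ 2 = (η * c i) ^ 2 := by
    intro i
    rw [blockNorm_sq, hinner, blockInner_comm, hinner, ← blockNorm_sq]
    field_simp [hg i]
  -- Block `i` is nontrivial because `g⁽ⁱ⁾ ≠ 0`, so the smoothness inequality forces `0 ≤ L i`.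
  have hL : ∀ i, 0 ≤ L i := by
    intro i
    have h1 := hsmooth g 0 i
    rw [sub_zero g] at h1
    exact nonneg_of_mul_nonneg_left ((blockNorm_nonneg _ _ _).trans h1) (hpos i)
  have hdesc := block_descent blk f L hdiff hsmooth x (xp - x)
  rw [add_sub_cancel] at hdesc
  have hlin : ∑ i, blockInner blk i (gradient f x) (xp - x)
      ≤ - (η * ∑ i, c i * blockNorm blk i (gradient f x))
        + 2 * η * ∑ i, c i * blockNorm blk i (g - gradient f x) := by
    rw [Finset.mul_sum, Finset.mul_sum, ← Finset.sum_neg_distrib, ← Finset.sum_add_distrib]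
    refine Finset.sum_le_sum fun i _ => ?_
    have hci : 0 < c i := hαl.trans_le (hc i).1
    have hk : 0 ≤ η * c i / blockNorm blk i g := by have := hpos i; positivity
    have h1 := mul_le_mul_of_nonneg_left (blockInner_lower blk i (gradient f x) g) hk
    rw [← mul_assoc, div_mul_cancel₀ _ (hg i)] at h1
    rw [hinner]
    linarith
  have hquad : ∑ i, L i * blockNorm blk i (xp - x) ^ 2 ≤ η ^ 2 * αu ^ 2 * ∑ i, L i := by
    rw [Finset.mul_sum]
    refine Finset.sum_le_sum fun i _ => ?_
    have hci : 0 ≤ c i := hαl.le.trans (hc i).1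
    have h1 : (η * c i) ^ 2 ≤ η ^ 2 * αu ^ 2 := by
      rw [mul_pow]
      gcongr
      exact (hc i).2
    rw [hnorm, mul_comm]
    exact mul_le_mul_of_nonneg_right h1 (hL i)
  linarith
end

section
/- Let 0 ≤ β₂ < 1, G > 0, and let g, v ∈ ℝ^k satisfy 0 < v_j ≤ G² and v_j ≥ (1 − β₂) g_j² for every coordinate j. Let r ∈ ℝ^k have coordinates r_j = g_j/√(v_j), and assume r ≠ 0. Then for every coordinate j and every real number a: a · r_j/‖r‖ ≥ √((1 − β₂)/(G² k)) · a · g_j − |a| · 1[a · g_j < 0], where 1[·] is the indicator function. In particular, if a · g_j ≥ 0 then a · r_j/‖r‖ ≥ √((1 − β₂)/(G² k)) · a · g_j. -/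
/-!
Since `r_i² = g_i² / v_i` and `(1 - β₂) g_i² ≤ v_i`, summing over coordinates gives
`(1 - β₂) ‖r‖² ≤ k`. Together with `v_j ≤ G²` this yields
`√((1 - β₂) / (G² k)) ≤ 1 / (√v_j ‖r‖)`, and `a r_j / ‖r‖ = (a g_j) / (√v_j ‖r‖)`, which settles
the case `a g_j ≥ 0`. If `a g_j < 0`, the first term on the right is nonpositive and
`|r_j| ≤ ‖r‖` gives `a r_j / ‖r‖ ≥ -|a|`.
-/

/-- Per-coordinate lower bound on the normalized LAMB ratio: if `0 ≤ β₂ < 1`, `G > 0`,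
`0 < v_j ≤ G²` and `v_j ≥ (1 - β₂) g_j²` coordinatewise, and `r_j = g_j/√(v_j)` with `r ≠ 0`,
then for every coordinate `j` and every `a : ℝ`,
`a · r_j/‖r‖ ≥ √((1 - β₂)/(G² k)) · a · g_j - |a| · 1[a · g_j < 0]`;
in particular, if `a · g_j ≥ 0` then `a · r_j/‖r‖ ≥ √((1 - β₂)/(G² k)) · a · g_j`. -/
theorem stmt6 {k : ℕ} (β₂ G : ℝ) (hβ₂0 : 0 ≤ β₂) (hβ₂1 : β₂ < 1) (hG : 0 < G)
    (g v : EuclideanSpace ℝ (Fin k))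
    (hvpos : ∀ j, 0 < v j) (hvle : ∀ j, v j ≤ G ^ 2)
    (hvge : ∀ j, (1 - β₂) * g j ^ 2 ≤ v j)
    (r : EuclideanSpace ℝ (Fin k)) (hr : ∀ j, r j = g j / Real.sqrt (v j))
    (hrne : r ≠ 0) :
    ∀ (j : Fin k) (a : ℝ),
      (a * r j / ‖r‖ ≥ Real.sqrt ((1 - β₂) / (G ^ 2 * k)) * (a * g j)
          - |a| * (if a * g j < 0 then (1 : ℝ) else 0))
      ∧ (0 ≤ a * g j → a * r j / ‖r‖ ≥ Real.sqrt ((1 - β₂) / (G ^ 2 * k)) * (a * g j)) := by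
  intro j a
  have hR : 0 < ‖r‖ := norm_pos_iff.mpr hrne
  have hs : 0 < Real.sqrt (v j) := Real.sqrt_pos.mpr (hvpos j)
  have hk : (0 : ℝ) < k := by exact_mod_cast j.pos
  have hnorm : (1 - β₂) * ‖r‖ ^ 2 ≤ k := by
    have hterm : ∀ i ∈ Finset.univ, (1 - β₂) * ‖r i‖ ^ 2 ≤ (1 : ℝ) := by
      intro i _
      rw [hr i, Real.norm_eq_abs, sq_abs, div_pow, Real.sq_sqrt (hvpos i).le, ← mul_div_assoc]
      exact (div_le_one (hvpos i)).mpr (hvge i)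
    rw [EuclideanSpace.norm_sq_eq, Finset.mul_sum]
    simpa using Finset.sum_le_sum hterm
  have hc : Real.sqrt ((1 - β₂) / (G ^ 2 * k)) ≤ 1 / (Real.sqrt (v j) * ‖r‖) := by
    refine Real.sqrt_le_iff.mpr ⟨by positivity, ?_⟩
    rw [div_pow, mul_pow, Real.sq_sqrt (hvpos j).le, one_pow,
      div_le_div_iff₀ (by positivity) (mul_pos (hvpos j) (by positivity))]
    calc (1 - β₂) * (v j * ‖r‖ ^ 2) = v j * ((1 - β₂) * ‖r‖ ^ 2) := by ring
      _ ≤ v j * k := mul_le_mul_of_nonneg_left hnorm (hvpos j).le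
      _ ≤ G ^ 2 * k := mul_le_mul_of_nonneg_right (hvle j) hk.le
      _ = 1 * (G ^ 2 * k) := (one_mul _).symm
  have hpos : 0 ≤ a * g j →
      a * r j / ‖r‖ ≥ Real.sqrt ((1 - β₂) / (G ^ 2 * k)) * (a * g j) := by
    intro h
    have heq : a * r j / ‖r‖ = 1 / (Real.sqrt (v j) * ‖r‖) * (a * g j) := by
      rw [hr j]
      field_simp
    rw [heq]
    exact mul_le_mul_of_nonneg_right hc h
  refine ⟨?_, hpos⟩
  split_ifs with h
  · have hlow : -|a| ≤ a * r j / ‖r‖ := by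
      rw [le_div_iff₀ hR]
      have h1 : |r j| ≤ ‖r‖ := PiLp.norm_apply_le r j
      have h2 : |a * r j| ≤ |a| * ‖r‖ := by
        rw [abs_mul]
        exact mul_le_mul_of_nonneg_left h1 (abs_nonneg a)
      linarith [neg_abs_le (a * r j)]
    have hneg := mul_nonpos_of_nonneg_of_nonpos
      (Real.sqrt_nonneg ((1 - β₂) / (G ^ 2 * k))) h.le
    linarith
  · simpa using hpos (not_lt.mp h)
end
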